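/- The map Q preserves the product structure: if R = R₁ + R₂ ∈ S²_B(⋀²ℝ^{n₁+n₂}) is a product curvature operator with factors R_i ∈ S²_B(⋀²ℝ^{n_i}), then Q(R) = Q(R₁) + Q(R₂) is again a product curvature operator, whose factors are Q(R₁) computed in S²_B(⋀²ℝ^{n₁}) and Q(R₂) computed in S²_B(⋀²ℝ^{n₂}). -/

import Mathlib

open scoped BigOperators
open Matrix Filter

noncomputable section

/-- `so n`: the Lie algebra of real skew-symmetric `n × n` matrices, as a submodule of
matrices.  It is the model for `⋀²ℝⁿ` under the identification `x ∧ y ↦ x yᵀ - y xᵀ`,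
i.e. `(x ∧ y)(z) = ⟨y,z⟩x - ⟨x,z⟩y`. -/
def so (n : ℕ) : Submodule ℝ (Matrix (Fin n) (Fin n) ℝ) where
  carrier := {A | Aᵀ = -A}
  add_mem' := fun {a b} ha hb => by
    simp only [Set.mem_setOf_eq] at *
    rw [Matrix.transpose_add, ha, hb, neg_add]
  zero_mem' := by simp
  smul_mem' := fun c {a} ha => by
    simp only [Set.mem_setOf_eq] at *
    rw [Matrix.transpose_smul, ha, smul_neg]

lemma mem_so {n : ℕ} {A : Matrix (Fin n) (Fin n) ℝ} : A ∈ so n ↔ Aᵀ = -A := Iff.rfl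

lemma so_skew {n : ℕ} (X : so n) : (X.1)ᵀ = -X.1 := mem_so.mp X.2

lemma so_skew' {n : ℕ} (X : so n) (i j : Fin n) : X.1 j i = -X.1 i j := by
  have h := congrFun (congrFun (so_skew X) i) j
  simpa [Matrix.transpose_apply] using h

/-- The Lie bracket (matrix commutator) on `so n`. -/
def brkt {n : ℕ} (X Y : so n) : so n :=
  ⟨X.1 * Y.1 - Y.1 * X.1, by
    rw [mem_so, Matrix.transpose_sub, Matrix.transpose_mul, Matrix.transpose_mul,
      so_skew X, so_skew Y]
    simp [neg_sub]⟩

/-- The inner product `⟨A, B⟩ = -(1/2) tr (A B)` on `so n ≅ ⋀²ℝⁿ`, for which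
`{e_i ∧ e_j : i < j}` is orthonormal. -/
def ip {n : ℕ} (X Y : so n) : ℝ := -(1 / 2) * (X.1 * Y.1).trace

/-- `ip X` as a linear functional. -/
def ipL {n : ℕ} (X : so n) : so n →ₗ[ℝ] ℝ where
  toFun Y := ip X Y
  map_add' Y Z := by
    simp [ip, Matrix.mul_add, Matrix.trace_add]
    ring
  map_smul' c Y := by
    simp [ip, Matrix.mul_smul, Matrix.trace_smul]
    ring

/-- The wedge `x ∧ y` of two vectors, as an element of `so n`. -/
def wedgeVec {n : ℕ} (x y : Fin n → ℝ) : so n :=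
  ⟨Matrix.of fun i j => x i * y j - y i * x j, by
    rw [mem_so]
    ext i j
    simp [Matrix.transpose_apply]
    ring⟩

/-- Index set for the standard orthonormal basis `{e_i ∧ e_j : i < j}` of `so n`. -/
def pairs (n : ℕ) : Finset (Fin n × Fin n) := Finset.univ.filter (fun p => p.1 < p.2)

/-- Standard basis vector of `ℝⁿ`. -/
def stdVec {n : ℕ} (i : Fin n) : Fin n → ℝ := Pi.single i 1

/-- The standard orthonormal basis element `e_i ∧ e_j` of `so n`. -/
def omegaB {n : ℕ} (p : Fin n × Fin n) : so n := wedgeVec (stdVec p.1) (stdVec p.2)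

/-- Hamilton's sharp product `A # B` of self-adjoint endomorphisms of `⋀²ℝⁿ ≅ so n`:
`⟨(A # B)(φ), ψ⟩ = (1/2) Σ_{α,β} ⟨[A ω_α, B ω_β], φ⟩ ⟨[ω_α, ω_β], ψ⟩`
over the orthonormal basis `{ω_α} = {e_i ∧ e_j : i < j}`. -/
def sharp {n : ℕ} (A B : Module.End ℝ (so n)) : Module.End ℝ (so n) :=
  (1 / 2 : ℝ) • ∑ p ∈ pairs n, ∑ q ∈ pairs n,
    (ipL (brkt (A (omegaB p)) (B (omegaB q)))).smulRight (brkt (omegaB p) (omegaB q))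

/-- The bilinear map `Q(A,B) = (1/2)(AB + BA) + A # B`. -/
def Qbil {n : ℕ} (A B : Module.End ℝ (so n)) : Module.End ℝ (so n) :=
  (1 / 2 : ℝ) • (A * B + B * A) + sharp A B

/-- `Q(R) = R² + R # R`. -/
def Qop {n : ℕ} (R : Module.End ℝ (so n)) : Module.End ℝ (so n) := R * R + sharp R R

/-- Self-adjointness of an endomorphism of `so n ≅ ⋀²ℝⁿ`. -/
def IsSelfAdjointCO {n : ℕ} (R : Module.End ℝ (so n)) : Prop :=
  ∀ X Y : so n, ip (R X) Y = ip X (R Y)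

/-- The first Bianchi identity. -/
def SatBianchi {n : ℕ} (R : Module.End ℝ (so n)) : Prop :=
  ∀ x y z w : Fin n → ℝ,
    ip (R (wedgeVec x y)) (wedgeVec z w) + ip (R (wedgeVec y z)) (wedgeVec x w)
      + ip (R (wedgeVec z x)) (wedgeVec y w) = 0

/-- Algebraic curvature operators: self-adjoint endomorphisms of `⋀²ℝⁿ` satisfying the
first Bianchi identity.  `IsACO R` says `R ∈ S²_B(⋀²ℝⁿ)`. -/
def IsACO {n : ℕ} (R : Module.End ℝ (so n)) : Prop := IsSelfAdjointCO R ∧ SatBianchi R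

/-- The Ricci tensor of `R`, `Ric(R)_{ij} = Σ_k ⟨R(e_i ∧ e_k), e_j ∧ e_k⟩`. -/
def RicM {n : ℕ} (R : Module.End ℝ (so n)) : Matrix (Fin n) (Fin n) ℝ :=
  Matrix.of fun i j => ∑ k, ip (R (wedgeVec (stdVec i) (stdVec k))) (wedgeVec (stdVec j) (stdVec k))

/-- The scalar curvature `s(R) = tr Ric(R)`. -/
def scal {n : ℕ} (R : Module.End ℝ (so n)) : ℝ := (RicM R).trace

/-- `‖Ric(R)‖² = tr (Ric(R)²)`. -/
def ricNormSq {n : ℕ} (R : Module.End ℝ (so n)) : ℝ := (RicM R * RicM R).trace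

/-- The traceless Ricci tensor `Ric₀(R)`. -/
def Ric0M {n : ℕ} (R : Module.End ℝ (so n)) : Matrix (Fin n) (Fin n) ℝ :=
  RicM R - (scal R / n) • (1 : Matrix (Fin n) (Fin n) ℝ)

/-- `R` is Einstein if `Ric(R)` is a scalar multiple of the identity of `ℝⁿ`. -/
def IsEinstein {n : ℕ} (R : Module.End ℝ (so n)) : Prop :=
  ∃ c : ℝ, RicM R = c • (1 : Matrix (Fin n) (Fin n) ℝ)

lemma wedgeEnd_key {n : ℕ} (A B : Matrix (Fin n) (Fin n) ℝ) (M : so n) :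
    (A * M.1 * Bᵀ + B * M.1 * Aᵀ)ᵀ = -(A * M.1 * Bᵀ + B * M.1 * Aᵀ) := by
  have hM := so_skew M
  rw [Matrix.transpose_add, Matrix.transpose_mul, Matrix.transpose_mul,
    Matrix.transpose_mul, Matrix.transpose_mul, Matrix.transpose_transpose,
    Matrix.transpose_transpose, hM]
  simp only [Matrix.mul_neg, Matrix.neg_mul, Matrix.mul_assoc, neg_add]
  abel

/-- The wedge `A ∧ B` of two endomorphisms of `ℝⁿ`, as an endomorphism of `⋀²ℝⁿ ≅ so n`:
`(A ∧ B)(v ∧ w) = (1/2)(Av ∧ Bw + Bv ∧ Aw)`, i.e. `M ↦ (1/2)(A M Bᵀ + B M Aᵀ)`. -/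
def wedgeEnd {n : ℕ} (A B : Matrix (Fin n) (Fin n) ℝ) : Module.End ℝ (so n) where
  toFun M := ⟨(1 / 2 : ℝ) • (A * M.1 * Bᵀ + B * M.1 * Aᵀ), by
    rw [mem_so, Matrix.transpose_smul, wedgeEnd_key, smul_neg]⟩
  map_add' M N := by
    apply Subtype.ext
    simp [Matrix.mul_add, Matrix.add_mul, smul_add]
    abel
  map_smul' c M := by
    apply Subtype.ext
    simp [Matrix.mul_smul, Matrix.smul_mul, smul_smul, mul_comm]

/-- Inner product `⟨A, B⟩ = tr(A ∘ B)` on endomorphisms of `⋀²ℝⁿ` (the Frobenius inner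
product for self-adjoint operators). -/
def endIP {n : ℕ} (A B : Module.End ℝ (so n)) : ℝ := LinearMap.trace ℝ ↥(so n) (A * B)

/-- Norm of an endomorphism of `⋀²ℝⁿ` induced by `endIP`. -/
def endNorm {n : ℕ} (A : Module.End ℝ (so n)) : ℝ := Real.sqrt (endIP A A)

/-- Huisken's trilinear form `tri(A,B,C) = tr((AB + BA + 2 A#B) ∘ C) = 2⟨Q(A,B), C⟩`. -/
def tri {n : ℕ} (A B C : Module.End ℝ (so n)) : ℝ :=
  LinearMap.trace ℝ ↥(so n) ((A * B + B * A + (2 : ℝ) • sharp A B) * C)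

/-- The identity component `R_I = (s(R)/(n(n-1))) id ∧ id` of a curvature operator. -/
def compI {n : ℕ} (R : Module.End ℝ (so n)) : Module.End ℝ (so n) :=
  (scal R / ((n : ℝ) * ((n : ℝ) - 1))) • 1

/-- The traceless-Ricci component `R_{Ric₀} = (2/(n-2)) Ric₀(R) ∧ id`. -/
def compRic0 {n : ℕ} (R : Module.End ℝ (so n)) : Module.End ℝ (so n) :=
  (2 / ((n : ℝ) - 2)) • wedgeEnd (Ric0M R) 1

/-- The Weyl component `R_W = R - R_I - R_{Ric₀}`. -/
def compW {n : ℕ} (R : Module.End ℝ (so n)) : Module.End ℝ (so n) := R - compI R - compRic0 R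

/-- The derivative `DQ̃(R)` of the normalized vector field
`Q̃(R) = Q(R) - ‖Ric R‖² R` at `R`, applied to `A`:
`DQ̃(R)(A) = 2Q(R,A) - ‖Ric R‖² A - 2 tr(Ric R · Ric A) R`. -/
def DQt {n : ℕ} (R A : Module.End ℝ (so n)) : Module.End ℝ (so n) :=
  (2 : ℝ) • Qbil R A - ricNormSq R • A - (2 * (RicM R * RicM A).trace) • R


/-- Extension of a vector of `ℝ^{n₁}` by zero to `ℝ^{n₁+n₂}`. -/
def inlV {n₁ n₂ : ℕ} (v : Fin n₁ → ℝ) : Fin (n₁ + n₂) → ℝ :=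
  fun i => if h : (i : ℕ) < n₁ then v ⟨i, h⟩ else 0

/-- Extension of a vector of `ℝ^{n₂}` by zero to `ℝ^{n₁+n₂}` (into the second factor). -/
def inrV {n₁ n₂ : ℕ} (w : Fin n₂ → ℝ) : Fin (n₁ + n₂) → ℝ :=
  fun i => if h : (i : ℕ) < n₁ then 0 else w ⟨(i : ℕ) - n₁, by omega⟩

lemma inrV_aux {n₁ n₂ : ℕ} (i : Fin (n₁ + n₂)) (h : ¬ (i : ℕ) < n₁) :
    (i : ℕ) - n₁ < n₂ := by omega

/-- Embedding `so n₁ → so (n₁ + n₂)` as the upper-left block. -/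
def embSoL {n₁ n₂ : ℕ} (M : so n₁) : so (n₁ + n₂) :=
  ⟨Matrix.of fun i j =>
      if hi : (i : ℕ) < n₁ then
        (if hj : (j : ℕ) < n₁ then M.1 ⟨i, hi⟩ ⟨j, hj⟩ else 0)
      else 0, by
    rw [mem_so]
    ext i j
    simp only [Matrix.transpose_apply, Matrix.of_apply, Matrix.neg_apply]
    by_cases hi : (i : ℕ) < n₁ <;> by_cases hj : (j : ℕ) < n₁ <;>
      simp [hi, hj]
    exact so_skew' M _ _⟩

/-- Embedding `so n₂ → so (n₁ + n₂)` as the lower-right block. -/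
def embSoR {n₁ n₂ : ℕ} (M : so n₂) : so (n₁ + n₂) :=
  ⟨Matrix.of fun i j =>
      if hi : (i : ℕ) < n₁ then 0
      else if hj : (j : ℕ) < n₁ then 0
      else M.1 ⟨(i : ℕ) - n₁, inrV_aux i hi⟩ ⟨(j : ℕ) - n₁, inrV_aux j hj⟩, by
    rw [mem_so]
    ext i j
    simp only [Matrix.transpose_apply, Matrix.of_apply, Matrix.neg_apply]
    by_cases hi : (i : ℕ) < n₁ <;> by_cases hj : (j : ℕ) < n₁ <;>
      simp [hi, hj]
    exact so_skew' M _ _⟩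

/-- `R ∈ S²_B(⋀²ℝ^{n₁+n₂})` is the product curvature operator of `R₁` and `R₂`:
`R(v ∧ w) = R_i(v ∧ w)` for `v, w` in the `i`-th factor, and `R(v ∧ w) = 0` for
`v ∈ ℝ^{n₁}`, `w ∈ ℝ^{n₂}`. -/
def IsProductOf {n₁ n₂ : ℕ} (R : Module.End ℝ (so (n₁ + n₂)))
    (R₁ : Module.End ℝ (so n₁)) (R₂ : Module.End ℝ (so n₂)) : Prop :=
  (∀ v w : Fin n₁ → ℝ,
     R (wedgeVec (inlV v) (inlV w)) = embSoL (R₁ (wedgeVec v w))) ∧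
  (∀ v w : Fin n₂ → ℝ,
     R (wedgeVec (inrV v) (inrV w)) = embSoR (R₂ (wedgeVec v w))) ∧
  (∀ (v : Fin n₁ → ℝ) (w : Fin n₂ → ℝ),
     R (wedgeVec (inlV v) (inrV w)) = 0)

/-!
A matrix `P : ℝᵐ → ℝⁿ` induces `⋀²P : ⋀²ℝᵐ → ⋀²ℝⁿ`, `M ↦ P M Pᵀ`, with adjoint `⋀²(Pᵀ)`.  A
product curvature operator is `R = ι₁ R₁ ι₁ᵀ + ι₂ R₂ ι₂ᵀ`, where `ι₁`, `ι₂` are induced by the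
inclusions of the two factors.  Both terms of `Q` are bilinear, so it suffices to treat pairs of
summands.  Since `∑ ιᵀω ⊗ ω = ∑ ω' ⊗ ιω'` over orthonormal bases `ω` of the target and `ω'` of the
source, the sharp product of two summands only involves brackets of elements in the images of the
corresponding embeddings: `ι₁` and `ι₂` are injective Lie algebra homomorphisms whose images
commute, so the diagonal terms give `ιᵢ (Rᵢ # Rᵢ) ιᵢᵀ` and the mixed terms vanish.
-/

section SkewSymmetric

variable {n : ℕ} {M : Type*} [AddCommMonoid M] [Module ℝ M]

lemma ip_comm (X Y : so n) : ip X Y = ip Y X := by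
  rw [ip, ip, Matrix.trace_mul_comm]

/-- The inner product of `so n` as a bilinear map, so that `sharp` becomes a multilinear expression
(`sharp_eq_sum_bilin`). -/
def ipBilin (n : ℕ) : so n →ₗ[ℝ] so n →ₗ[ℝ] ℝ :=
  LinearMap.mk₂ ℝ ip
    (fun X Y Z => by simp only [ip_comm _ Z]; exact (ipL Z).map_add X Y)
    (fun c X Y => by simp only [ip_comm _ Y]; exact (ipL Y).map_smul c X)
    (fun X => (ipL X).map_add)
    (fun c X => (ipL X).map_smul c)

/-- The Lie bracket of `so n` as a bilinear map; like `ipBilin`, it serves to make the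
multilinearity of `sharp` visible. -/
def brktBilin (n : ℕ) : so n →ₗ[ℝ] so n →ₗ[ℝ] so n :=
  LinearMap.mk₂ ℝ brkt
    (fun X Y Z => Subtype.ext (by simp only [brkt, Submodule.coe_add]; noncomm_ring))
    (fun c X Y => Subtype.ext (by simp [brkt, smul_sub]))
    (fun X Y Z => Subtype.ext (by simp only [brkt, Submodule.coe_add]; noncomm_ring))
    (fun c X Y => Subtype.ext (by simp [brkt, smul_sub]))

lemma coe_wedgeVec (v w : Fin n → ℝ) : (wedgeVec v w).1 = vecMulVec v w - vecMulVec w v := by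
  ext i j
  simp only [wedgeVec, Matrix.of_apply, Matrix.sub_apply, vecMulVec_apply]

lemma wedgeVec_zero_left (w : Fin n → ℝ) : wedgeVec 0 w = 0 :=
  Subtype.ext (by simp [coe_wedgeVec])

lemma wedgeVec_zero_right (v : Fin n → ℝ) : wedgeVec v 0 = 0 :=
  Subtype.ext (by simp [coe_wedgeVec])

lemma coe_omegaB (p : Fin n × Fin n) :
    (omegaB p).1 = Matrix.single p.1 p.2 1 - Matrix.single p.2 p.1 1 := by
  rw [omegaB, coe_wedgeVec, stdVec, stdVec, Matrix.single_eq_single_vecMulVec_single,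
    Matrix.single_eq_single_vecMulVec_single]

lemma ip_omegaB (X : so n) (p : Fin n × Fin n) : ip X (omegaB p) = X.1 p.1 p.2 := by
  simp only [ip, coe_omegaB, mul_sub, Matrix.trace_sub, Matrix.trace_mul_single, so_skew' X p.1 p.2,
    MulOpposite.op_one, one_smul]
  ring

lemma sum_ip_smul_omegaB (X : so n) : ∑ p ∈ pairs n, ip X (omegaB p) • omegaB p = X := by
  apply Subtype.ext
  ext i j
  have summand (p : Fin n × Fin n) : (ip X (omegaB p) • omegaB p).1 i j =
      (if p = (i, j) then X.1 i j else 0) - if p = (j, i) then X.1 j i else 0 := by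
    simp only [Submodule.coe_smul_of_tower, ip_omegaB, coe_omegaB, Matrix.smul_apply,
      Matrix.sub_apply, Matrix.single_apply, smul_eq_mul, Prod.ext_iff]
    grind
  have entry : (∑ p ∈ pairs n, ip X (omegaB p) • omegaB p).1 i j =
      (if i < j then X.1 i j else 0) - if j < i then X.1 j i else 0 := by
    simp only [Submodule.coe_sum, Matrix.sum_apply, summand, Finset.sum_sub_distrib,
      Finset.sum_ite_eq', pairs, Finset.mem_filter, Finset.mem_univ, true_and]
  have skew := so_skew' X i j
  rw [entry]
  rcases lt_trichotomy i j with h | rfl | h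
  · rw [if_pos h, if_neg h.not_gt, sub_zero]
  · rw [if_neg (lt_irrefl i), sub_zero]
    linarith
  · rw [if_neg h.not_gt, if_pos h, skew, zero_sub, neg_neg]

lemma ext_omegaB {f g : so n →ₗ[ℝ] M} (h : ∀ p ∈ pairs n, f (omegaB p) = g (omegaB p)) :
    f = g := by
  ext1 X
  rw [← sum_ip_smul_omegaB X, map_sum, map_sum]
  exact Finset.sum_congr rfl fun p hp => by rw [map_smul, map_smul, h p hp]

end SkewSymmetric

section WedgeMap

variable {l m n : ℕ}

/-- The map `⋀²P : ⋀²ℝᵐ → ⋀²ℝⁿ`, `v ∧ w ↦ Pv ∧ Pw`, induced by `P : ℝᵐ → ℝⁿ`.  In terms of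
skew-symmetric matrices it is `M ↦ P M Pᵀ`. -/
def wedgeMap (P : Matrix (Fin n) (Fin m) ℝ) : so m →ₗ[ℝ] so n where
  toFun X := ⟨P * X.1 * Pᵀ, by
    rw [mem_so]
    simp only [Matrix.transpose_mul, Matrix.transpose_transpose, so_skew X, Matrix.neg_mul,
      Matrix.mul_neg, Matrix.mul_assoc]⟩
  map_add' X Y := Subtype.ext (by simp [Matrix.mul_add, Matrix.add_mul])
  map_smul' c X := Subtype.ext (by simp)

lemma coe_wedgeMap (P : Matrix (Fin n) (Fin m) ℝ) (X : so m) :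
    (wedgeMap P X).1 = P * X.1 * Pᵀ := rfl

lemma wedgeMap_wedgeVec (P : Matrix (Fin n) (Fin m) ℝ) (v w : Fin m → ℝ) :
    wedgeMap P (wedgeVec v w) = wedgeVec (P *ᵥ v) (P *ᵥ w) := by
  apply Subtype.ext
  simp only [coe_wedgeMap, coe_wedgeVec, Matrix.mul_sub, Matrix.sub_mul, Matrix.mul_vecMulVec,
    Matrix.vecMulVec_mul, Matrix.vecMul_transpose]

lemma wedgeMap_wedgeMap (P : Matrix (Fin n) (Fin m) ℝ) (Q : Matrix (Fin m) (Fin l) ℝ) (X : so l) :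
    wedgeMap P (wedgeMap Q X) = wedgeMap (P * Q) X :=
  Subtype.ext (by simp only [coe_wedgeMap, Matrix.transpose_mul, Matrix.mul_assoc])

lemma ip_wedgeMap_left (P : Matrix (Fin n) (Fin m) ℝ) (X : so m) (Y : so n) :
    ip (wedgeMap P X) Y = ip X (wedgeMap Pᵀ Y) := by
  simp only [ip, coe_wedgeMap, Matrix.transpose_transpose]
  rw [Matrix.mul_assoc, Matrix.mul_assoc, Matrix.trace_mul_comm, Matrix.mul_assoc, Matrix.mul_assoc]

lemma wedgeMap_transpose_wedgeMap {P : Matrix (Fin n) (Fin m) ℝ} (hP : Pᵀ * P = 1) (X : so m) :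
    wedgeMap Pᵀ (wedgeMap P X) = X :=
  Subtype.ext (by simp [wedgeMap_wedgeMap, coe_wedgeMap, hP])

lemma wedgeMap_transpose_wedgeMap_of_orthogonal {P : Matrix (Fin n) (Fin l) ℝ}
    {Q : Matrix (Fin n) (Fin m) ℝ} (hPQ : Pᵀ * Q = 0) (X : so m) :
    wedgeMap Pᵀ (wedgeMap Q X) = 0 :=
  Subtype.ext (by simp [wedgeMap_wedgeMap, coe_wedgeMap, hPQ])

lemma coe_wedgeMap_mul_coe_wedgeMap (P : Matrix (Fin n) (Fin l) ℝ) (Q : Matrix (Fin n) (Fin m) ℝ)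
    (X : so l) (Y : so m) :
    (wedgeMap P X).1 * (wedgeMap Q Y).1 = P * X.1 * (Pᵀ * Q) * Y.1 * Qᵀ := by
  simp only [coe_wedgeMap, Matrix.mul_assoc]

lemma brkt_wedgeMap {P : Matrix (Fin n) (Fin m) ℝ} (hP : Pᵀ * P = 1) (X Y : so m) :
    brkt (wedgeMap P X) (wedgeMap P Y) = wedgeMap P (brkt X Y) := by
  apply Subtype.ext
  simp only [brkt, coe_wedgeMap_mul_coe_wedgeMap, hP, Matrix.mul_one]
  simp only [coe_wedgeMap, Matrix.mul_sub, Matrix.sub_mul, Matrix.mul_assoc]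

lemma transpose_mul_eq_zero_comm {α β γ R : Type*} [Fintype α] [CommSemiring R]
    {P : Matrix α β R} {Q : Matrix α γ R} : Pᵀ * Q = 0 ↔ Qᵀ * P = 0 := by
  rw [← Matrix.transpose_eq_zero, Matrix.transpose_mul, Matrix.transpose_transpose]

lemma brkt_wedgeMap_of_orthogonal {P : Matrix (Fin n) (Fin l) ℝ}
    {Q : Matrix (Fin n) (Fin m) ℝ} (hPQ : Pᵀ * Q = 0) (X : so l) (Y : so m) :
    brkt (wedgeMap P X) (wedgeMap Q Y) = 0 := by
  apply Subtype.ext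
  simp [brkt, coe_wedgeMap_mul_coe_wedgeMap, hPQ, transpose_mul_eq_zero_comm.1 hPQ]

lemma sum_pairs_wedgeMap_transpose {M : Type*} [AddCommMonoid M] [Module ℝ M]
    (P : Matrix (Fin n) (Fin m) ℝ) (T : so m →ₗ[ℝ] so n →ₗ[ℝ] M) :
    ∑ p ∈ pairs n, T (wedgeMap Pᵀ (omegaB p)) (omegaB p) =
      ∑ q ∈ pairs m, T (omegaB q) (wedgeMap P (omegaB q)) :=
  calc ∑ p ∈ pairs n, T (wedgeMap Pᵀ (omegaB p)) (omegaB p)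
      = ∑ p ∈ pairs n, ∑ q ∈ pairs m,
          ip (wedgeMap Pᵀ (omegaB p)) (omegaB q) • T (omegaB q) (omegaB p) := by
        refine Finset.sum_congr rfl fun p _ => ?_
        conv_lhs => rw [← sum_ip_smul_omegaB (wedgeMap Pᵀ (omegaB p))]
        simp only [map_sum, map_smul, LinearMap.sum_apply, LinearMap.smul_apply]
    _ = ∑ q ∈ pairs m, ∑ p ∈ pairs n,
          ip (wedgeMap P (omegaB q)) (omegaB p) • T (omegaB q) (omegaB p) := by
        rw [Finset.sum_comm]
        simp only [ip_wedgeMap_left, ip_comm (omegaB _) (wedgeMap Pᵀ _)]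
    _ = ∑ q ∈ pairs m, T (omegaB q) (wedgeMap P (omegaB q)) := by
        refine Finset.sum_congr rfl fun q _ => ?_
        conv_rhs => rw [← sum_ip_smul_omegaB (wedgeMap P (omegaB q))]
        simp only [map_sum, map_smul]

end WedgeMap

section Sharp

variable {l m n : ℕ}

lemma sharp_eq_sum_bilin (A B : Module.End ℝ (so n)) :
    sharp A B = (1 / 2 : ℝ) • ∑ p ∈ pairs n, ∑ q ∈ pairs n,
      LinearMap.smulRightₗ (ipBilin n (brktBilin n (A (omegaB p)) (B (omegaB q))))
        (brktBilin n (omegaB p) (omegaB q)) := rfl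

lemma sharp_add_left (A B C : Module.End ℝ (so n)) :
    sharp (A + B) C = sharp A C + sharp B C := by
  simp only [sharp_eq_sum_bilin, LinearMap.add_apply, map_add, Finset.sum_add_distrib, smul_add]

lemma sharp_add_right (A B C : Module.End ℝ (so n)) :
    sharp A (B + C) = sharp A B + sharp A C := by
  simp only [sharp_eq_sum_bilin, LinearMap.add_apply, map_add, Finset.sum_add_distrib, smul_add]

/-- The operator `⋀²P ∘ A ∘ (⋀²P)ᵀ` of `⋀²ℝⁿ`.  When `P` is an isometric embedding this is `A`
on the image of `⋀²P`, extended by zero to the orthogonal complement. -/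
def extendEnd (P : Matrix (Fin n) (Fin m) ℝ) (A : Module.End ℝ (so m)) : Module.End ℝ (so n) :=
  wedgeMap P ∘ₗ A ∘ₗ wedgeMap Pᵀ

lemma extendEnd_apply (P : Matrix (Fin n) (Fin m) ℝ) (A : Module.End ℝ (so m)) (X : so n) :
    extendEnd P A X = wedgeMap P (A (wedgeMap Pᵀ X)) := rfl

lemma extendEnd_add (P : Matrix (Fin n) (Fin m) ℝ) (A B : Module.End ℝ (so m)) :
    extendEnd P (A + B) = extendEnd P A + extendEnd P B := by
  simp only [extendEnd, LinearMap.add_comp, LinearMap.comp_add]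

lemma extendEnd_wedgeMap {P : Matrix (Fin n) (Fin m) ℝ} (hP : Pᵀ * P = 1)
    (A : Module.End ℝ (so m)) (X : so m) :
    extendEnd P A (wedgeMap P X) = wedgeMap P (A X) := by
  rw [extendEnd_apply, wedgeMap_transpose_wedgeMap hP]

lemma extendEnd_wedgeMap_of_orthogonal {P : Matrix (Fin n) (Fin l) ℝ}
    {Q : Matrix (Fin n) (Fin m) ℝ} (hPQ : Pᵀ * Q = 0) (A : Module.End ℝ (so l)) (X : so m) :
    extendEnd P A (wedgeMap Q X) = 0 := by
  rw [extendEnd_apply, wedgeMap_transpose_wedgeMap_of_orthogonal hPQ, map_zero, map_zero]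

lemma extendEnd_mul_extendEnd {P : Matrix (Fin n) (Fin m) ℝ} (hP : Pᵀ * P = 1)
    (A B : Module.End ℝ (so m)) : extendEnd P A * extendEnd P B = extendEnd P (A * B) :=
  LinearMap.ext fun X => extendEnd_wedgeMap hP A (B (wedgeMap Pᵀ X))

lemma extendEnd_mul_extendEnd_of_orthogonal {P : Matrix (Fin n) (Fin l) ℝ}
    {Q : Matrix (Fin n) (Fin m) ℝ} (hPQ : Pᵀ * Q = 0)
    (A : Module.End ℝ (so l)) (B : Module.End ℝ (so m)) : extendEnd P A * extendEnd Q B = 0 :=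
  LinearMap.ext fun X => extendEnd_wedgeMap_of_orthogonal hPQ A (B (wedgeMap Qᵀ X))

lemma sharp_extendEnd_extendEnd (P : Matrix (Fin n) (Fin l) ℝ) (Q : Matrix (Fin n) (Fin m) ℝ)
    (A : Module.End ℝ (so l)) (B : Module.End ℝ (so m)) :
    sharp (extendEnd P A) (extendEnd Q B) =
      (1 / 2 : ℝ) • ∑ p ∈ pairs l, ∑ q ∈ pairs m,
        (ipL (brkt (wedgeMap P (A (omegaB p))) (wedgeMap Q (B (omegaB q))))).smulRight
          (brkt (wedgeMap P (omegaB p)) (wedgeMap Q (omegaB q))) := by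
  have sum_right (X X' : so n) :
      ∑ q ∈ pairs n, (ipL (brkt X (extendEnd Q B (omegaB q)))).smulRight (brkt X' (omegaB q)) =
        ∑ q ∈ pairs m, (ipL (brkt X (wedgeMap Q (B (omegaB q))))).smulRight
          (brkt X' (wedgeMap Q (omegaB q))) :=
    sum_pairs_wedgeMap_transpose Q (LinearMap.smulRightₗ.compl₁₂
      (ipBilin n ∘ₗ brktBilin n X ∘ₗ wedgeMap Q ∘ₗ B) (brktBilin n X'))
  have sum_left (Y Y' : so n) :
      ∑ p ∈ pairs n, (ipL (brkt (extendEnd P A (omegaB p)) Y)).smulRight (brkt (omegaB p) Y') =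
        ∑ p ∈ pairs l, (ipL (brkt (wedgeMap P (A (omegaB p))) Y)).smulRight
          (brkt (wedgeMap P (omegaB p)) Y') :=
    sum_pairs_wedgeMap_transpose P (LinearMap.smulRightₗ.compl₁₂
      (ipBilin n ∘ₗ (brktBilin n).flip Y ∘ₗ wedgeMap P ∘ₗ A) ((brktBilin n).flip Y'))
  simp only [sharp, sum_right]
  rw [Finset.sum_comm]
  simp only [sum_left]
  rw [Finset.sum_comm]

lemma sharp_extendEnd {P : Matrix (Fin n) (Fin m) ℝ} (hP : Pᵀ * P = 1)
    (A B : Module.End ℝ (so m)) :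
    sharp (extendEnd P A) (extendEnd P B) = extendEnd P (sharp A B) := by
  have smulRight_ipL_wedgeMap (X Y : so m) : (ipL (wedgeMap P X)).smulRight (wedgeMap P Y) =
      extendEnd P ((ipL X).smulRight Y) := by
    ext1 Z
    rw [extendEnd_apply, LinearMap.smulRight_apply, LinearMap.smulRight_apply, map_smul]
    exact congrArg (· • wedgeMap P Y) (ip_wedgeMap_left P X Z)
  rw [sharp_extendEnd_extendEnd, sharp]
  simp only [brkt_wedgeMap hP, smulRight_ipL_wedgeMap]
  ext1 X
  simp only [extendEnd_apply, LinearMap.smul_apply, LinearMap.sum_apply, map_smul, map_sum]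

lemma sharp_extendEnd_of_orthogonal {P : Matrix (Fin n) (Fin l) ℝ} {Q : Matrix (Fin n) (Fin m) ℝ}
    (hPQ : Pᵀ * Q = 0) (A : Module.End ℝ (so l)) (B : Module.End ℝ (so m)) :
    sharp (extendEnd P A) (extendEnd Q B) = 0 := by
  simp only [sharp_extendEnd_extendEnd, brkt_wedgeMap_of_orthogonal hPQ,
    LinearMap.smulRight_zero, Finset.sum_const_zero, smul_zero]

theorem Qop_extendEnd_add_extendEnd {P : Matrix (Fin n) (Fin l) ℝ} {Q : Matrix (Fin n) (Fin m) ℝ}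
    (hP : Pᵀ * P = 1) (hQ : Qᵀ * Q = 1) (hPQ : Pᵀ * Q = 0)
    (A : Module.End ℝ (so l)) (B : Module.End ℝ (so m)) :
    Qop (extendEnd P A + extendEnd Q B) = extendEnd P (Qop A) + extendEnd Q (Qop B) := by
  have hQP := transpose_mul_eq_zero_comm.1 hPQ
  have mul_eq : (extendEnd P A + extendEnd Q B) * (extendEnd P A + extendEnd Q B) =
      extendEnd P (A * A) + extendEnd Q (B * B) := by
    simp only [add_mul, mul_add, extendEnd_mul_extendEnd hP, extendEnd_mul_extendEnd hQ,
      extendEnd_mul_extendEnd_of_orthogonal hPQ, extendEnd_mul_extendEnd_of_orthogonal hQP,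
      add_zero, zero_add]
  have sharp_eq : sharp (extendEnd P A + extendEnd Q B) (extendEnd P A + extendEnd Q B) =
      extendEnd P (sharp A A) + extendEnd Q (sharp B B) := by
    simp only [sharp_add_left, sharp_add_right, sharp_extendEnd hP, sharp_extendEnd hQ,
      sharp_extendEnd_of_orthogonal hPQ, sharp_extendEnd_of_orthogonal hQP, add_zero, zero_add]
  rw [Qop, Qop, Qop, mul_eq, sharp_eq, extendEnd_add, extendEnd_add]
  exact add_add_add_comm _ _ _ _

end Sharp

section Product

variable {n₁ n₂ : ℕ}

/-- The matrix of the inclusion `ℝ^{n₁} → ℝ^{n₁+n₂}` of the first factor, which induces the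
embedding `embSoL` through `wedgeMap`.  Its columns are the first `n₁` columns of the identity. -/
def inlMat (n₁ n₂ : ℕ) : Matrix (Fin (n₁ + n₂)) (Fin n₁) ℝ :=
  (1 : Matrix _ _ ℝ).submatrix id (Fin.castAdd n₂)

/-- The matrix of the inclusion `ℝ^{n₂} → ℝ^{n₁+n₂}` of the second factor, which induces the
embedding `embSoR` through `wedgeMap`.  Its columns are the last `n₂` columns of the identity. -/
def inrMat (n₁ n₂ : ℕ) : Matrix (Fin (n₁ + n₂)) (Fin n₂) ℝ :=
  (1 : Matrix _ _ ℝ).submatrix id (Fin.natAdd n₁)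

lemma castAdd_lt_natAdd (i : Fin n₁) (j : Fin n₂) : Fin.castAdd n₂ i < Fin.natAdd n₁ j :=
  i.isLt.trans_le (Nat.le_add_right n₁ j)

lemma inlMat_castAdd (i j : Fin n₁) :
    inlMat n₁ n₂ (Fin.castAdd n₂ i) j = (1 : Matrix _ _ ℝ) i j := by
  simp [inlMat, Matrix.one_apply]

lemma inlMat_natAdd (i : Fin n₂) (j : Fin n₁) : inlMat n₁ n₂ (Fin.natAdd n₁ i) j = 0 :=
  Matrix.one_apply_ne (castAdd_lt_natAdd j i).ne'

lemma inrMat_castAdd (i : Fin n₁) (j : Fin n₂) : inrMat n₁ n₂ (Fin.castAdd n₂ i) j = 0 :=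
  Matrix.one_apply_ne (castAdd_lt_natAdd i j).ne

lemma inrMat_natAdd (i j : Fin n₂) :
    inrMat n₁ n₂ (Fin.natAdd n₁ i) j = (1 : Matrix _ _ ℝ) i j := by
  simp [inrMat, Matrix.one_apply]

lemma inlMat_transpose_mul_inlMat (n₁ n₂ : ℕ) : (inlMat n₁ n₂)ᵀ * inlMat n₁ n₂ = 1 := by
  ext i j
  simp [Matrix.mul_apply, Fin.sum_univ_add, inlMat_castAdd, inlMat_natAdd, Matrix.one_apply,
    eq_comm]

lemma inrMat_transpose_mul_inrMat (n₁ n₂ : ℕ) : (inrMat n₁ n₂)ᵀ * inrMat n₁ n₂ = 1 := by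
  ext i j
  simp [Matrix.mul_apply, Fin.sum_univ_add, inrMat_castAdd, inrMat_natAdd, Matrix.one_apply,
    eq_comm]

lemma inlMat_transpose_mul_inrMat (n₁ n₂ : ℕ) : (inlMat n₁ n₂)ᵀ * inrMat n₁ n₂ = 0 := by
  ext i j
  simp [Matrix.mul_apply, Fin.sum_univ_add, inlMat_natAdd, inrMat_castAdd]

lemma inlMat_mulVec (v : Fin n₁ → ℝ) : inlMat n₁ n₂ *ᵥ v = inlV v := by
  ext i
  refine Fin.addCases (fun i => ?_) (fun i => ?_) i <;>
    simp [inlV, Matrix.mulVec, dotProduct, inlMat_castAdd, inlMat_natAdd, Matrix.one_apply]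

lemma inrMat_mulVec (v : Fin n₂ → ℝ) : inrMat n₁ n₂ *ᵥ v = inrV v := by
  ext i
  refine Fin.addCases (fun i => ?_) (fun i => ?_) i <;>
    simp [inrV, Matrix.mulVec, dotProduct, inrMat_castAdd, inrMat_natAdd, Matrix.one_apply]

lemma wedgeMap_inlMat (X : so n₁) : wedgeMap (inlMat n₁ n₂) X = embSoL X := by
  apply Subtype.ext
  ext i j
  refine Fin.addCases (fun i => ?_) (fun i => ?_) i <;>
  refine Fin.addCases (fun j => ?_) (fun j => ?_) j <;>
    simp [embSoL, coe_wedgeMap, Matrix.mul_apply, inlMat_castAdd, inlMat_natAdd, Matrix.one_apply]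

lemma wedgeMap_inrMat (X : so n₂) : wedgeMap (inrMat n₁ n₂) X = embSoR X := by
  apply Subtype.ext
  ext i j
  refine Fin.addCases (fun i => ?_) (fun i => ?_) i <;>
  refine Fin.addCases (fun j => ?_) (fun j => ?_) j <;>
    simp [embSoR, coe_wedgeMap, Matrix.mul_apply, inrMat_castAdd, inrMat_natAdd, Matrix.one_apply]

lemma inlV_stdVec (i : Fin n₁) : inlV (stdVec i) = stdVec (Fin.castAdd n₂ i) := by
  rw [← inlMat_mulVec, stdVec, Matrix.mulVec_single_one]
  ext j
  simp [inlMat, stdVec, Matrix.one_apply, Pi.single_apply]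

lemma inrV_stdVec (i : Fin n₂) : inrV (stdVec i) = stdVec (Fin.natAdd n₁ i) := by
  rw [← inrMat_mulVec, stdVec, Matrix.mulVec_single_one]
  ext j
  simp [inrMat, stdVec, Matrix.one_apply, Pi.single_apply]

lemma IsProductOf.unique {R S : Module.End ℝ (so (n₁ + n₂))} {R₁ : Module.End ℝ (so n₁)}
    {R₂ : Module.End ℝ (so n₂)} (hR : IsProductOf R R₁ R₂) (hS : IsProductOf S R₁ R₂) :
    R = S := by
  refine ext_omegaB fun ⟨i, j⟩ hij => ?_
  have hlt : i < j := (Finset.mem_filter.1 hij).2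
  rw [omegaB]
  induction i using Fin.addCases with
  | left i =>
    induction j using Fin.addCases with
    | left j => rw [← inlV_stdVec, ← inlV_stdVec, hR.1, hS.1]
    | right j => rw [← inlV_stdVec, ← inrV_stdVec, hR.2.2, hS.2.2]
  | right i =>
    induction j using Fin.addCases with
    | left j => exact absurd hlt (castAdd_lt_natAdd j i).not_gt
    | right j => rw [← inrV_stdVec, ← inrV_stdVec, hR.2.1, hS.2.1]

lemma isProductOf_extendEnd_add_extendEnd (R₁ : Module.End ℝ (so n₁)) (R₂ : Module.End ℝ (so n₂)) :
    IsProductOf (extendEnd (inlMat n₁ n₂) R₁ + extendEnd (inrMat n₁ n₂) R₂) R₁ R₂ := by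
  have hlr := inlMat_transpose_mul_inrMat n₁ n₂
  have hrl := transpose_mul_eq_zero_comm.1 hlr
  refine ⟨fun v w => ?_, fun v w => ?_, fun v w => ?_⟩
  · rw [← wedgeMap_inlMat, ← inlMat_mulVec, ← inlMat_mulVec, ← wedgeMap_wedgeVec,
      LinearMap.add_apply, extendEnd_wedgeMap (inlMat_transpose_mul_inlMat n₁ n₂),
      extendEnd_wedgeMap_of_orthogonal hrl, add_zero]
  · rw [← wedgeMap_inrMat, ← inrMat_mulVec, ← inrMat_mulVec, ← wedgeMap_wedgeVec,
      LinearMap.add_apply, extendEnd_wedgeMap (inrMat_transpose_mul_inrMat n₁ n₂),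
      extendEnd_wedgeMap_of_orthogonal hlr, zero_add]
  · simp only [← inlMat_mulVec, ← inrMat_mulVec, LinearMap.add_apply, extendEnd_apply,
      wedgeMap_wedgeVec, Matrix.mulVec_mulVec, hlr, hrl, Matrix.zero_mulVec, wedgeVec_zero_left,
      wedgeVec_zero_right, map_zero, add_zero]

lemma isProductOf_iff {R : Module.End ℝ (so (n₁ + n₂))} {R₁ : Module.End ℝ (so n₁)}
    {R₂ : Module.End ℝ (so n₂)} :
    IsProductOf R R₁ R₂ ↔ R = extendEnd (inlMat n₁ n₂) R₁ + extendEnd (inrMat n₁ n₂) R₂ := by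
  refine ⟨fun h => h.unique (isProductOf_extendEnd_add_extendEnd R₁ R₂), ?_⟩
  rintro rfl
  exact isProductOf_extendEnd_add_extendEnd R₁ R₂

end Product

theorem stmt11_general {n₁ n₂ : ℕ} {R : Module.End ℝ (so (n₁ + n₂))}
    {R₁ : Module.End ℝ (so n₁)} {R₂ : Module.End ℝ (so n₂)} (hprod : IsProductOf R R₁ R₂) :
    IsProductOf (Qop R) (Qop R₁) (Qop R₂) := by
  rw [isProductOf_iff] at hprod ⊢
  rw [hprod, Qop_extendEnd_add_extendEnd (inlMat_transpose_mul_inlMat n₁ n₂)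
    (inrMat_transpose_mul_inrMat n₁ n₂) (inlMat_transpose_mul_inrMat n₁ n₂)]

/-- `Q` preserves the product structure: if
`R = R₁ + R₂ ∈ S²_B(⋀²ℝ^{n₁+n₂})` is a product curvature operator, then
`Q(R) = Q(R₁) + Q(R₂)` is the product curvature operator of `Q(R₁)` and `Q(R₂)`
(computed in `S²_B(⋀²ℝ^{n₁})` and `S²_B(⋀²ℝ^{n₂})` respectively). -/
theorem stmt11 (n₁ n₂ : ℕ) (R : Module.End ℝ (so (n₁ + n₂)))
    (R₁ : Module.End ℝ (so n₁)) (R₂ : Module.End ℝ (so n₂))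
    (hACO : IsACO R) (hACO₁ : IsACO R₁) (hACO₂ : IsACO R₂)
    (hprod : IsProductOf R R₁ R₂) :
    IsProductOf (Qop R) (Qop R₁) (Qop R₂) := by
  exact stmt11_general hprod
end
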